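/- Let β̂ be the elastic-net estimator and β* ∈ ℝ^p be nonzero with support H = {j : β*_j ≠ 0} and d* = |H|. Let ζ > 1 and assume ‖ℓ̇(β*) + 2λ₂·β*‖_∞ ≤ ((ζ−1)/(ζ+1))·λ₁, assume C(ζ,H,ℓ̈(β*)) > 0, and set τ = K·(ζ+1)·d*·λ₁ / (2·C(ζ,H,ℓ̈(β*))²). If τ ≤ (1/2)·e^{−1} and a_τ ∈ [0, 1/2] satisfies a_τ·exp(−2a_τ) = τ, then ‖β̂ − β*‖₁ ≤ exp(2a_τ)·(ζ+1)·d*·λ₁ / (2·C(ζ,H,ℓ̈(β*))²). -/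

import Mathlib

open Real BigOperators Finset MeasureTheory

/-- Inner product of a row of the design matrix with a coefficient vector. -/
def dotp {p : ℕ} (u v : Fin p → ℝ) : ℝ := ∑ j, u j * v j

/-- Average negative binomial negative log-likelihood. -/
noncomputable def negLogLik (n p : ℕ) (θ : ℝ) (x : Fin n → Fin p → ℝ)
    (y : Fin n → ℝ) (β : Fin p → ℝ) : ℝ :=
  -(1 / (n : ℝ)) *
    ∑ i, (y i * dotp (x i) β - (θ + y i) * Real.log (θ + Real.exp (dotp (x i) β)))

/-- Elastic-net objective function. -/
noncomputable def enObj (n p : ℕ) (θ : ℝ) (x : Fin n → Fin p → ℝ) (y : Fin n → ℝ)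
    (lam1 lam2 : ℝ) (β : Fin p → ℝ) : ℝ :=
  negLogLik n p θ x y β + lam1 * ∑ j, |β j| + lam2 * ∑ j, (β j) ^ 2

/-- `j`-th component of the gradient of the average negative log-likelihood. -/
noncomputable def gradComp (n p : ℕ) (θ : ℝ) (x : Fin n → Fin p → ℝ) (y : Fin n → ℝ)
    (β : Fin p → ℝ) (j : Fin p) : ℝ :=
  (1 / (n : ℝ)) *
    ∑ i, x i j * θ * (Real.exp (dotp (x i) β) - y i) / (θ + Real.exp (dotp (x i) β))

/-- The quadratic form `bᵀ ℓ̈(β) b` of the Hessian of the average negative log-likelihood. -/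
noncomputable def hessQuad (n p : ℕ) (θ : ℝ) (x : Fin n → Fin p → ℝ) (y : Fin n → ℝ)
    (β b : Fin p → ℝ) : ℝ :=
  (1 / (n : ℝ)) *
    ∑ i, (dotp (x i) b) ^ 2 *
      (θ * (θ + y i) * Real.exp (dotp (x i) β) / (θ + Real.exp (dotp (x i) β)) ^ 2)

/-- The compatibility factor `C(ζ,H,Σ)` of the quadratic form `Q = bᵀΣb`,
over the cone `S(ζ,H) = {b : ‖b_{Hᶜ}‖₁ ≤ ζ‖b_H‖₁}`. -/
noncomputable def compatFactor (p : ℕ) (ζ : ℝ) (H : Finset (Fin p))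
    (Q : (Fin p → ℝ) → ℝ) : ℝ :=
  sInf {r : ℝ | ∃ b : Fin p → ℝ, b ≠ 0 ∧
    (∑ j ∈ Hᶜ, |b j|) ≤ ζ * ∑ j ∈ H, |b j| ∧
    r = Real.sqrt ((H.card : ℝ) * Q b) / ∑ j ∈ H, |b j|}

/-!
Each observation contributes to `ℓ` a convex function of the linear predictor whose derivative `s`
satisfies `s'(u) * d ^ 2 ≤ (1 + |d|) * (s(u + d) - s(u)) * d`, because
`d ^ 2 ≤ (1 + |d|) * d * (exp d - 1)`. Put `b = β̂ - β*`. Averaging over the observations gives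
`bᵀ ℓ̈(β*) b ≤ (1 + K * ‖b‖₁) * ⟨ℓ̇(β̂) - ℓ̇(β*), b⟩`.

Minimality of `β̂` bounds the last factor by `2 * λ₁ / (ζ + 1) * (ζ * S - T)`, where
`S = ‖b_H‖₁` and `T = ‖b_{Hᶜ}‖₁`. Since that factor is nonnegative, `b` lies in the cone, and the
compatibility factor together with `(S + T) * (ζ * S - T) ≤ ((ζ + 1) * S / 2) ^ 2` yields
`‖b‖₁ ≤ (1 + K * ‖b‖₁) * B` with `B = (ζ + 1) * d* * λ₁ / (2 * C ^ 2)`. This inequality is linear in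
`‖b‖₁`: as `τ = K * B`, it says `(1 - τ) * ‖b‖₁ ≤ B`. Finally
`1 - a * exp (-2 * a) ≥ exp (-2 * a)` for `a ≥ 0`.
-/

section Score

/-- Derivative in the linear predictor `u` of the negative log-likelihood of one negative binomial
observation `y`. -/
noncomputable def nbScore (θ y u : ℝ) : ℝ := θ * (exp u - y) / (θ + exp u)

/-- Derivative of `nbScore θ y`: the weight of an observation in the Hessian. -/
noncomputable def nbWeight (θ y u : ℝ) : ℝ := θ * (θ + y) * exp u / (θ + exp u) ^ 2

lemma sq_le_one_add_abs_mul_mul_exp_sub_one (d : ℝ) :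
    d ^ 2 ≤ (1 + |d|) * (d * (exp d - 1)) := by
  rcases le_total 0 d with hd | hd
  · rw [abs_of_nonneg hd]
    have h : d ≤ exp d - 1 := by linarith [add_one_le_exp d]
    nlinarith [mul_le_mul_of_nonneg_left h hd, mul_nonneg (sq_nonneg d) (hd.trans h)]
  · rw [abs_of_nonpos hd]
    have h : (1 - d) * exp d ≤ 1 := by
      calc (1 - d) * exp d ≤ exp (-d) * exp d := by gcongr; linarith [add_one_le_exp (-d)]
        _ = 1 := by rw [← exp_add, neg_add_cancel, exp_zero]
    nlinarith

variable {θ y : ℝ}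

lemma nbWeight_nonneg (hθ : 0 < θ) (hy : 0 ≤ y) (u : ℝ) : 0 ≤ nbWeight θ y u := by
  unfold nbWeight
  positivity

lemma nbScore_add_sub (hθ : 0 < θ) (y u d : ℝ) :
    nbScore θ y (u + d) - nbScore θ y u
      = nbWeight θ y u * ((exp d - 1) * (θ + exp u) / (θ + exp u * exp d)) := by
  have hu : θ + exp u ≠ 0 := by positivity
  have hud : θ + exp u * exp d ≠ 0 := by positivity
  unfold nbScore nbWeight
  rw [exp_add]
  field_simp
  ring

lemma hasDerivAt_nbLogLik (hθ : 0 < θ) (y u : ℝ) :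
    HasDerivAt (fun u ↦ y * u - (θ + y) * log (θ + exp u)) (-nbScore θ y u) u := by
  have hne : θ + exp u ≠ 0 := by positivity
  refine (((hasDerivAt_id u).const_mul y).sub
    ((((hasDerivAt_exp u).const_add θ).log hne).const_mul (θ + y))).congr_deriv ?_
  unfold nbScore
  field_simp
  ring

lemma sq_mul_nbWeight_le (hθ : 0 < θ) (hy : 0 ≤ y) (u d : ℝ) :
    d ^ 2 * nbWeight θ y u
      ≤ (1 + |d|) * ((nbScore θ y (u + d) - nbScore θ y u) * d) := by
  have hw : 0 ≤ nbWeight θ y u := nbWeight_nonneg hθ hy u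
  have hpos : d ^ 2 ≤ (1 + |d|) * (d * (exp d - 1)) :=
    sq_le_one_add_abs_mul_mul_exp_sub_one d
  have hneg : d ^ 2 * exp d ≤ (1 + |d|) * (d * (exp d - 1)) := by
    have h := mul_le_mul_of_nonneg_right (sq_le_one_add_abs_mul_mul_exp_sub_one (-d))
      (exp_pos d).le
    have hexp : exp (-d) * exp d = 1 := by rw [← exp_add, neg_add_cancel, exp_zero]
    rw [abs_neg, neg_sq] at h
    linear_combination h - (1 + |d|) * d * hexp
  have hratio : d ^ 2
      ≤ (1 + |d|) * (d * (exp d - 1)) * (θ + exp u) / (θ + exp u * exp d) := by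
    rw [le_div_iff₀ (by positivity)]
    linear_combination θ * hpos + exp u * hneg
  rw [nbScore_add_sub hθ]
  linear_combination nbWeight θ y u * hratio

lemma nbScore_add_sub_mul_nonneg (hθ : 0 < θ) (hy : 0 ≤ y) (u d : ℝ) :
    0 ≤ (nbScore θ y (u + d) - nbScore θ y u) * d := by
  have hsq : 0 ≤ d ^ 2 * nbWeight θ y u := mul_nonneg (sq_nonneg d) (nbWeight_nonneg hθ hy u)
  exact nonneg_of_mul_nonneg_right (hsq.trans (sq_mul_nbWeight_le hθ hy u d)) (by positivity)

end Score

section Likelihood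

lemma dotp_eq_dotProduct {p : ℕ} (u v : Fin p → ℝ) : dotp u v = u ⬝ᵥ v := rfl

lemma abs_dotp_le {p : ℕ} {u : Fin p → ℝ} {K : ℝ} (hu : ∀ j, |u j| ≤ K) (v : Fin p → ℝ) :
    |dotp u v| ≤ K * ∑ j, |v j| := by
  calc |dotp u v| ≤ ∑ j, |u j * v j| := abs_sum_le_sum_abs _ _
    _ ≤ ∑ j, K * |v j| := by
      gcongr with j
      rw [abs_mul]
      gcongr
      exact hu j
    _ = K * ∑ j, |v j| := by rw [mul_sum]

variable {n p : ℕ}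

lemma dotp_gradComp (θ : ℝ) (x : Fin n → Fin p → ℝ) (y : Fin n → ℝ) (β b : Fin p → ℝ) :
    dotp (gradComp n p θ x y β) b
      = 1 / (n : ℝ) * ∑ i, nbScore θ (y i) (dotp (x i) β) * dotp (x i) b := by
  simp only [dotp, gradComp, nbScore, mul_sum, sum_mul]
  rw [sum_comm]
  refine sum_congr rfl fun i _ ↦ sum_congr rfl fun j _ ↦ ?_
  ring

lemma hasLineDerivAt_negLogLik {θ : ℝ} (hθ : 0 < θ) (x : Fin n → Fin p → ℝ) (y : Fin n → ℝ)
    (β b : Fin p → ℝ) :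
    HasLineDerivAt ℝ (negLogLik n p θ x y) (dotp (gradComp n p θ x y β) b) β b := by
  have hterm (i : Fin n) : HasDerivAt
      (fun t : ℝ ↦ y i * dotp (x i) (β + t • b)
        - (θ + y i) * log (θ + exp (dotp (x i) (β + t • b))))
      (-nbScore θ (y i) (dotp (x i) β) * dotp (x i) b) 0 := by
    have hline : HasDerivAt (fun t : ℝ ↦ dotp (x i) (β + t • b)) (dotp (x i) b) 0 := by
      simpa [dotp_eq_dotProduct, dotProduct_add, dotProduct_smul] using
        ((hasDerivAt_id (0 : ℝ)).mul_const (dotp (x i) b)).const_add (dotp (x i) β)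
    have hscore := hasDerivAt_nbLogLik hθ (y i) (dotp (x i) β)
    exact HasDerivAt.comp_of_eq 0 hscore hline (by simp)
  refine ((HasDerivAt.fun_sum fun i (_ : i ∈ univ) ↦ hterm i).const_mul
    (-(1 / (n : ℝ)))).congr_deriv ?_
  simp only [dotp_gradComp, neg_mul, sum_neg_distrib, mul_neg, neg_neg]

lemma hessQuad_nonneg {θ : ℝ} (hθ : 0 < θ) {y : Fin n → ℝ} (hy : ∀ i, 0 ≤ y i)
    (x : Fin n → Fin p → ℝ) (β b : Fin p → ℝ) : 0 ≤ hessQuad n p θ x y β b :=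
  mul_nonneg (by positivity)
    (sum_nonneg fun i _ ↦ mul_nonneg (sq_nonneg _) (nbWeight_nonneg hθ (hy i) _))

lemma hessQuad_le_mul_dotp_gradComp_sub {θ : ℝ} (hθ : 0 < θ) {x : Fin n → Fin p → ℝ}
    {y : Fin n → ℝ} (hy : ∀ i, 0 ≤ y i) {β b : Fin p → ℝ} {M : ℝ} (hM : ∀ i, |dotp (x i) b| ≤ M) :
    hessQuad n p θ x y β b
      ≤ (1 + M) * dotp (gradComp n p θ x y (β + b) - gradComp n p θ x y β) b := by
  have hterm (i : Fin n) : dotp (x i) b ^ 2 * nbWeight θ (y i) (dotp (x i) β)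
      ≤ (1 + M) * ((nbScore θ (y i) (dotp (x i) (β + b)) - nbScore θ (y i) (dotp (x i) β))
        * dotp (x i) b) := by
    rw [show dotp (x i) (β + b) = dotp (x i) β + dotp (x i) b from dotProduct_add ..]
    refine (sq_mul_nbWeight_le hθ (hy i) _ _).trans ?_
    gcongr
    · exact nbScore_add_sub_mul_nonneg hθ (hy i) _ _
    · exact hM i
  calc hessQuad n p θ x y β b
      = 1 / (n : ℝ) * ∑ i, dotp (x i) b ^ 2 * nbWeight θ (y i) (dotp (x i) β) := rfl
    _ ≤ 1 / (n : ℝ) * ∑ i, (1 + M) * ((nbScore θ (y i) (dotp (x i) (β + b))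
          - nbScore θ (y i) (dotp (x i) β)) * dotp (x i) b) :=
      mul_le_mul_of_nonneg_left (sum_le_sum fun i _ ↦ hterm i) (by positivity)
    _ = (1 + M) * (dotp (gradComp n p θ x y (β + b)) b - dotp (gradComp n p θ x y β) b) := by
      simp only [dotp_gradComp, ← mul_sum, sub_mul, sum_sub_distrib]
      ring
    _ = (1 + M) * dotp (gradComp n p θ x y (β + b) - gradComp n p θ x y β) b := by
      simp only [dotp_eq_dotProduct, sub_dotProduct]

end Likelihood

section ElasticNet

lemma lineDeriv_add_sub_nonneg_of_forall_le {E : Type*} [AddCommGroup E] [Module ℝ E]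
    {f g : E → ℝ} {f' : ℝ} {a v : E} (hf : HasLineDerivAt ℝ f f' a v)
    (hg : ConvexOn ℝ Set.univ g) (hmin : ∀ z, f a + g a ≤ f z + g z) :
    0 ≤ f' + (g (a + v) - g a) := by
  suffices h : g a - g (a + v) ≤ f' by linarith
  refine ge_of_tendsto hf.tendsto_slope_zero_right ?_
  filter_upwards [Ioo_mem_nhdsGT one_pos] with t ⟨ht0, ht1⟩
  have hconv : g (a + t • v) ≤ (1 - t) * g a + t * g (a + v) := by
    have h := hg.2 (Set.mem_univ a) (Set.mem_univ (a + v)) (sub_nonneg.2 ht1.le) ht0.le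
      (sub_add_cancel 1 t)
    rwa [show (1 - t) • a + t • (a + v) = a + t • v by module] at h
  rw [smul_eq_mul, le_inv_mul_iff₀ ht0]
  linarith [hmin (a + t • v)]

/-- The elastic-net penalty, the part of the objective `enObj` that does not involve the data. -/
def enPenalty {ι : Type*} [Fintype ι] (lam1 lam2 : ℝ) (β : ι → ℝ) : ℝ :=
  lam1 * ∑ j, |β j| + lam2 * ∑ j, β j ^ 2

lemma convexOn_enPenalty {ι : Type*} [Fintype ι] {lam1 lam2 : ℝ} (hlam1 : 0 ≤ lam1)
    (hlam2 : 0 ≤ lam2) : ConvexOn ℝ Set.univ (enPenalty (ι := ι) lam1 lam2) := by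
  have hcoord {f : ℝ → ℝ} (hf : ConvexOn ℝ Set.univ f) :
      ConvexOn ℝ Set.univ fun β : ι → ℝ ↦ ∑ j, f (β j) := by
    refine ⟨convex_univ, fun β _ γ _ s t hs ht hst ↦ ?_⟩
    simp only [smul_sum, ← sum_add_distrib]
    exact sum_le_sum fun j _ ↦ hf.2 (Set.mem_univ (β j)) (Set.mem_univ (γ j)) hs ht hst
  exact ((hcoord convexOn_univ_norm).smul hlam1).add
    ((hcoord even_two.convexOn_pow).smul hlam2)

lemma sum_abs_sub_sum_abs_add_le {ι : Type*} [Fintype ι] [DecidableEq ι] {H : Finset ι}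
    {β : ι → ℝ} (hH : ∀ j ∉ H, β j = 0) (b : ι → ℝ) :
    ∑ j, |β j| - ∑ j, |β j + b j| ≤ ∑ j ∈ H, |b j| - ∑ j ∈ Hᶜ, |b j| := by
  rw [← sum_sub_distrib, ← sum_add_sum_compl H, sub_eq_add_neg, ← sum_neg_distrib]
  refine add_le_add (sum_le_sum fun j _ ↦ ?_) (sum_le_sum fun j hj ↦ ?_)
  · simpa using abs_sub_abs_le_abs_sub (β j) (β j + b j)
  · simp [hH j (mem_compl.1 hj)]

lemma enPenalty_sub_enPenalty_add_le {p : ℕ} {lam1 lam2 : ℝ} (hlam1 : 0 ≤ lam1)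
    (hlam2 : 0 ≤ lam2) {H : Finset (Fin p)} {β : Fin p → ℝ} (hH : ∀ j ∉ H, β j = 0)
    (b : Fin p → ℝ) :
    enPenalty lam1 lam2 β - enPenalty lam1 lam2 (β + b)
      ≤ lam1 * (∑ j ∈ H, |b j| - ∑ j ∈ Hᶜ, |b j|) - 2 * lam2 * dotp β b := by
  have hsq : ∑ j, β j ^ 2 - ∑ j, (β j + b j) ^ 2 ≤ -2 * dotp β b := by
    rw [dotp, mul_sum, ← sum_sub_distrib]
    exact sum_le_sum fun j _ ↦ by linarith [sq_nonneg (b j)]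
  simp only [enPenalty, Pi.add_apply]
  linear_combination lam1 * sum_abs_sub_sum_abs_add_le hH b + lam2 * hsq

lemma dotp_gradComp_sub_le_of_forall_enObj_le {n p : ℕ} {θ : ℝ} (hθ : 0 < θ)
    {x : Fin n → Fin p → ℝ} {y : Fin n → ℝ} {lam1 lam2 : ℝ} (hlam1 : 0 ≤ lam1) (hlam2 : 0 ≤ lam2)
    {β b : Fin p → ℝ}
    (hmin : ∀ γ, enObj n p θ x y lam1 lam2 (β + b) ≤ enObj n p θ x y lam1 lam2 γ)
    {H : Finset (Fin p)} (hH : ∀ j ∉ H, β j = 0) {κ : ℝ}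
    (hκ : ∀ j, |gradComp n p θ x y β j + 2 * lam2 * β j| ≤ κ) :
    dotp (gradComp n p θ x y (β + b) - gradComp n p θ x y β) b
      ≤ lam1 * (∑ j ∈ H, |b j| - ∑ j ∈ Hᶜ, |b j|) + κ * ∑ j, |b j| := by
  have hfirst : 0 ≤ dotp (gradComp n p θ x y (β + b)) (-b)
      + (enPenalty lam1 lam2 β - enPenalty lam1 lam2 (β + b)) := by
    simpa only [add_neg_cancel_right] using lineDeriv_add_sub_nonneg_of_forall_le
      (hasLineDerivAt_negLogLik hθ x y (β + b) (-b)) (convexOn_enPenalty hlam1 hlam2)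
      fun γ ↦ by simpa only [enObj, enPenalty, add_assoc] using hmin γ
  have hpen := enPenalty_sub_enPenalty_add_le hlam1 hlam2 hH b
  have hnoise : |dotp (gradComp n p θ x y β + (2 * lam2) • β) b| ≤ κ * ∑ j, |b j| :=
    abs_dotp_le hκ b
  simp only [dotp_eq_dotProduct, dotProduct_neg, add_dotProduct, sub_dotProduct,
    smul_dotProduct, smul_eq_mul] at hfirst hpen hnoise ⊢
  linarith [neg_abs_le (gradComp n p θ x y β ⬝ᵥ b + 2 * lam2 * (β ⬝ᵥ b))]

end ElasticNet

section Oracle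

lemma compatFactor_sq_mul_sq_le {p : ℕ} {ζ : ℝ} {H : Finset (Fin p)} {Q : (Fin p → ℝ) → ℝ}
    {b : Fin p → ℝ} (hQ : 0 ≤ Q b) (hcone : ∑ j ∈ Hᶜ, |b j| ≤ ζ * ∑ j ∈ H, |b j|) :
    compatFactor p ζ H Q ^ 2 * (∑ j ∈ H, |b j|) ^ 2 ≤ #H * Q b := by
  have hratio (c : Fin p → ℝ) : 0 ≤ √(#H * Q c) / ∑ j ∈ H, |c j| := by positivity
  have hHQ : 0 ≤ #H * Q b := by positivity
  rcases eq_or_ne (∑ j ∈ H, |b j|) 0 with hS | hS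
  · simpa [hS] using hHQ
  have hS_pos : 0 < ∑ j ∈ H, |b j| := hS.symm.lt_of_le (by positivity)
  have hb : b ≠ 0 := fun h ↦ hS (by simp [h])
  have hnonneg : 0 ≤ compatFactor p ζ H Q :=
    Real.sInf_nonneg fun r ⟨c, _, _, hr⟩ ↦ hr ▸ hratio c
  have hle : compatFactor p ζ H Q ≤ √(#H * Q b) / ∑ j ∈ H, |b j| :=
    csInf_le ⟨0, fun r ⟨c, _, _, hr⟩ ↦ hr ▸ hratio c⟩ ⟨b, hb, hcone, rfl⟩
  rw [le_div_iff₀ hS_pos] at hle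
  rw [← mul_pow]
  exact (Real.le_sqrt (by positivity) hHQ).1 hle

lemma add_le_of_sq_mul_sq_le {A C S T ζ : ℝ} (hA : 0 ≤ A) (hC : 0 < C) (hS : 0 ≤ S)
    (hT : 0 ≤ T) (hcone : T ≤ ζ * S) (h : C ^ 2 * S ^ 2 ≤ A * (ζ * S - T)) :
    S + T ≤ (ζ + 1) ^ 2 * A / (4 * C ^ 2) := by
  rcases hS.eq_or_lt with rfl | hS_pos
  · calc 0 + T ≤ 0 := by linarith
      _ ≤ _ := by positivity
  have hamgm : (S + T) * (ζ * S - T) ≤ (ζ + 1) ^ 2 / 4 * S ^ 2 := by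
    linear_combination sq_nonneg ((ζ * S - T) - (S + T)) / 4
  rw [le_div_iff₀ (by positivity)]
  refine le_of_mul_le_mul_right ?_ (pow_pos hS_pos 2)
  linear_combination 4 * (S + T) * h + 4 * A * hamgm

lemma sum_abs_le_of_le_mul_of_compatFactor_pos {p : ℕ} {ζ : ℝ} {H : Finset (Fin p)}
    {Q : (Fin p → ℝ) → ℝ} {b : Fin p → ℝ} {D F lam : ℝ} (hζ : 0 < ζ) (hlam : 0 < lam) (hF : 0 < F)
    (hQ : 0 ≤ Q b) (hQD : Q b ≤ F * D)
    (hD : D ≤ 2 * lam / (ζ + 1) * (ζ * ∑ j ∈ H, |b j| - ∑ j ∈ Hᶜ, |b j|))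
    (hC : 0 < compatFactor p ζ H Q) :
    ∑ j, |b j| ≤ F * ((ζ + 1) * #H * lam / (2 * compatFactor p ζ H Q ^ 2)) := by
  rw [← sum_add_sum_compl H]
  set S := ∑ j ∈ H, |b j|
  set T := ∑ j ∈ Hᶜ, |b j|
  set C := compatFactor p ζ H Q
  have hD_nonneg : 0 ≤ D := nonneg_of_mul_nonneg_right (hQ.trans hQD) hF
  have hcone : T ≤ ζ * S :=
    sub_nonneg.1 (nonneg_of_mul_nonneg_right (hD_nonneg.trans hD) (by positivity))
  have hcompat : C ^ 2 * S ^ 2 ≤ #H * F * (2 * lam / (ζ + 1)) * (ζ * S - T) := by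
    calc C ^ 2 * S ^ 2 ≤ #H * Q b := compatFactor_sq_mul_sq_le hQ hcone
      _ ≤ #H * (F * (2 * lam / (ζ + 1) * (ζ * S - T))) := by
          gcongr
          exact hQD.trans (by gcongr)
      _ = #H * F * (2 * lam / (ζ + 1)) * (ζ * S - T) := by ring
  refine (add_le_of_sq_mul_sq_le (by positivity) hC (by positivity) (by positivity)
    hcone hcompat).trans_eq ?_
  field_simp
  ring

lemma le_exp_two_mul_mul {a L B : ℝ} (ha : 0 ≤ a) (hL : 0 ≤ L)
    (h : (1 - a * exp (-2 * a)) * L ≤ B) : L ≤ exp (2 * a) * B := by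
  have hinv : exp (2 * a) * exp (-2 * a) = 1 := by rw [← exp_add]; simp
  have hexp : 1 ≤ exp (2 * a) * (1 - a * exp (-2 * a)) := by
    linear_combination add_one_le_exp (2 * a) + ha + a * hinv
  calc L ≤ exp (2 * a) * (1 - a * exp (-2 * a)) * L := le_mul_of_one_le_left hL hexp
    _ = exp (2 * a) * ((1 - a * exp (-2 * a)) * L) := mul_assoc ..
    _ ≤ exp (2 * a) * B := by gcongr

end Oracle

theorem stmt5_general {n p : ℕ} {θ : ℝ} (hθ : 0 < θ)
    {x : Fin n → Fin p → ℝ} {y : Fin n → ℝ} (hy : ∀ i, 0 ≤ y i)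
    {lam1 lam2 : ℝ} (hlam1 : 0 < lam1) (hlam2 : 0 ≤ lam2) {betah : Fin p → ℝ}
    (hmin : ∀ β, enObj n p θ x y lam1 lam2 betah ≤ enObj n p θ x y lam1 lam2 β)
    {betas : Fin p → ℝ} {H : Finset (Fin p)} (hH : ∀ j ∉ H, betas j = 0)
    {K : ℝ} (hK : 0 ≤ K) (hKub : ∀ i j, |x i j| ≤ K) {ζ : ℝ} (hζ : 0 < ζ)
    (hevent : ∀ j, |gradComp n p θ x y betas j + 2 * lam2 * betas j| ≤ (ζ - 1) / (ζ + 1) * lam1)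
    {Cf : ℝ} (hCf : Cf = compatFactor p ζ H (hessQuad n p θ x y betas)) (hCfpos : 0 < Cf)
    {τ : ℝ} (hτ : τ = K * (ζ + 1) * #H * lam1 / (2 * Cf ^ 2)) :
    (1 - τ) * ∑ j, |betah j - betas j| ≤ (ζ + 1) * #H * lam1 / (2 * Cf ^ 2) := by
  obtain ⟨b, rfl⟩ : ∃ b, betah = betas + b := ⟨betah - betas, (add_sub_cancel _ _).symm⟩
  simp only [Pi.add_apply, add_sub_cancel_left]
  have hcurv : hessQuad n p θ x y betas b ≤ (1 + K * ∑ j, |b j|)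
      * dotp (gradComp n p θ x y (betas + b) - gradComp n p θ x y betas) b :=
    hessQuad_le_mul_dotp_gradComp_sub hθ hy fun i ↦ abs_dotp_le (hKub i) b
  have hbasic : dotp (gradComp n p θ x y (betas + b) - gradComp n p θ x y betas) b
      ≤ 2 * lam1 / (ζ + 1) * (ζ * ∑ j ∈ H, |b j| - ∑ j ∈ Hᶜ, |b j|) := by
    refine (dotp_gradComp_sub_le_of_forall_enObj_le hθ hlam1.le hlam2 hmin hH hevent).trans_eq ?_
    rw [← sum_add_sum_compl H]
    field_simp
    ring
  have hl1 : ∑ j, |b j| ≤ (1 + K * ∑ j, |b j|) * ((ζ + 1) * #H * lam1 / (2 * Cf ^ 2)) := by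
    subst hCf
    exact sum_abs_le_of_le_mul_of_compatFactor_pos hζ hlam1 (by positivity)
      (hessQuad_nonneg hθ hy x betas b) hcurv hbasic hCfpos
  rw [hτ]
  linear_combination hl1

theorem stmt5
    (n p : ℕ) (hn : 1 ≤ n) (hp : 1 ≤ p)
    (θ : ℝ) (hθ : 0 < θ)
    (x : Fin n → Fin p → ℝ) (y : Fin n → ℝ) (hy : ∀ i, 0 ≤ y i)
    (lam1 lam2 : ℝ) (hlam1 : 0 < lam1) (hlam2 : 0 < lam2)
    (betah : Fin p → ℝ)
    (hmin : ∀ β : Fin p → ℝ,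
      enObj n p θ x y lam1 lam2 betah ≤ enObj n p θ x y lam1 lam2 β)
    (betas : Fin p → ℝ) (hbs : betas ≠ 0)
    (H : Finset (Fin p)) (hH : H = Finset.univ.filter (fun j => betas j ≠ 0))
    (K : ℝ) (hKub : ∀ i j, |x i j| ≤ K) (hKmax : ∃ i j, |x i j| = K)
    (ζ : ℝ) (hζ : 1 < ζ)
    (hevent : ∀ j, |gradComp n p θ x y betas j + 2 * lam2 * betas j|
        ≤ (ζ - 1) / (ζ + 1) * lam1)
    (Cf : ℝ) (hCf : Cf = compatFactor p ζ H (hessQuad n p θ x y betas))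
    (hCfpos : 0 < Cf)
    (τ : ℝ) (hτ : τ = K * (ζ + 1) * (H.card : ℝ) * lam1 / (2 * Cf ^ 2))
    (hτle : τ ≤ (1 / 2) * Real.exp (-1))
    (aτ : ℝ) (haτ0 : 0 ≤ aτ) (haτ2 : aτ ≤ 1 / 2)
    (haτeq : aτ * Real.exp (-2 * aτ) = τ) :
    ∑ j, |betah j - betas j|
      ≤ Real.exp (2 * aτ) * (ζ + 1) * (H.card : ℝ) * lam1 / (2 * Cf ^ 2) := by
  have hK : 0 ≤ K := hKmax.elim fun i ⟨j, hij⟩ ↦ hij ▸ abs_nonneg (x i j)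
  have hsupp : ∀ j ∉ H, betas j = 0 := by simp [hH]
  have h := stmt5_general hθ hy hlam1 hlam2.le hmin hsupp hK hKub (one_pos.trans hζ) hevent
    hCf hCfpos hτ
  rw [← haτeq] at h
  simpa only [mul_assoc, mul_div_assoc] using le_exp_two_mul_mul haτ0 (by positivity) h
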